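/- Let Λ₁, Λ₂ ∈ ℝ with d := Λ₁ − Λ₂ an integer, d ≥ 2. Define three families of functions on (0,∞)², indexed by 0 ≤ i ≤ d: f_{0,i}(a₁,a₂) = a₁^{2−Λ₂}·a₂^{Λ₁} if i = 0 and f_{0,i} = 0 otherwise; f_{1,i}(a₁,a₂) = (−1)^{i/2}·a₁^{Λ₁+1}·a₂^{Λ₂+1} if i is even and f_{1,i} = 0 if i is odd; f_{2,i}(a₁,a₂) = (−1)^{(i−1)/2}·a₁^{Λ₁+1}·a₂^{Λ₂+1} if i is odd and f_{2,i} = 0 if i is even. Then for any constants C₀, C₁, C₂ ∈ ℂ the family φ_i := C₀f_{0,i} + C₁f_{1,i} + C₂f_{2,i} satisfies the full system: (A_i): (∂₁+Λ₂−i−2)φ_i + (∂₂+Λ₁−i−2)φ_{i+2} = 0 for 0 ≤ i ≤ d−2; (B_i): (∂₂−Λ₁+i)φ_i + (∂₁−2Λ₁+Λ₂+i)φ_{i+2} = 0 for 0 ≤ i ≤ d−2; (C_j): j(∂₂−Λ₁+j−1)φ_{j−1} − (Λ₁−Λ₂−j)(∂₁−Λ₁+j−1)φ_{j+1} = 0 for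 0 ≤ j ≤ d. -/

import Mathlib

/-!
Every `φ_i` is a combination `α_i P + β_i Q` of the two monomials `P = a₁^{2−Λ₂} a₂^{Λ₁}` and
`Q = a₁^{Λ₁+1} a₂^{Λ₂+1}`, where `α_i = 0` for `i ≠ 0` and `β_{i+2} = −β_i`. Monomials are
eigenfunctions of the Euler operators (`eul1_monomials`, `eul2_monomials`), so each equation becomes
an identity between coefficients. The `P`-part vanishes since `∂₁ + Λ₂ − 2` and `∂₂ − Λ₁` kill `P`.
On `Q`, the two operators of `(A_i)` have equal eigenvalues, and likewise for `(B_i)`; those of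
`(C_j)` give `−j(Λ₁−Λ₂−j)(β_{j−1} + β_{j+1})`. The relation `β_{i+2} = −β_i` then makes every
`Q`-part vanish.
-/

open Complex Real

/-- Euler operator `∂₁ = a₁·∂/∂a₁` in the first variable. -/
noncomputable def eul1 (φ : ℝ → ℝ → ℂ) : ℝ → ℝ → ℂ :=
  fun x y => (x : ℂ) * deriv (fun t => φ t y) x

/-- Euler operator `∂₂ = a₂·∂/∂a₂` in the second variable. -/
noncomputable def eul2 (φ : ℝ → ℝ → ℂ) : ℝ → ℝ → ℂ :=
  fun x y => (y : ℂ) * deriv (fun t => φ x t) y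

/-- The family `f_{0,i}`: `a₁^{2−Λ₂}·a₂^{Λ₁}` for `i = 0`, and `0` otherwise. -/
noncomputable def f0 (Λ₁ Λ₂ : ℝ) (i : ℕ) : ℝ → ℝ → ℂ :=
  fun x y => if i = 0 then ((x ^ (2 - Λ₂) * y ^ Λ₁ : ℝ) : ℂ) else 0

/-- The family `f_{1,i}`: `(−1)^{i/2}·a₁^{Λ₁+1}·a₂^{Λ₂+1}` for even `i`, `0` for odd `i`. -/
noncomputable def f1 (Λ₁ Λ₂ : ℝ) (i : ℕ) : ℝ → ℝ → ℂ :=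
  fun x y => if i % 2 = 0 then
    (-1 : ℂ) ^ (i / 2) * ((x ^ (Λ₁ + 1) * y ^ (Λ₂ + 1) : ℝ) : ℂ) else 0

/-- The family `f_{2,i}`: `(−1)^{(i−1)/2}·a₁^{Λ₁+1}·a₂^{Λ₂+1}` for odd `i`, `0` for even `i`. -/
noncomputable def f2 (Λ₁ Λ₂ : ℝ) (i : ℕ) : ℝ → ℝ → ℂ :=
  fun x y => if i % 2 = 1 then
    (-1 : ℂ) ^ ((i - 1) / 2) * ((x ^ (Λ₁ + 1) * y ^ (Λ₂ + 1) : ℝ) : ℂ) else 0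

/-- The coefficient `α_i` of `a₁^{2−Λ₂} a₂^{Λ₁}` in `φ_i`. -/
noncomputable def coeffP (C₀ : ℂ) (i : ℕ) : ℂ := if i = 0 then C₀ else 0

/-- The coefficient `β_i` of `a₁^{Λ₁+1} a₂^{Λ₂+1}` in `φ_i`. -/
noncomputable def coeffQ (C₁ C₂ : ℂ) (i : ℕ) : ℂ :=
  if i % 2 = 0 then C₁ * (-1) ^ (i / 2) else C₂ * (-1) ^ ((i - 1) / 2)

lemma coeffQ_add_two (C₁ C₂ : ℂ) (i : ℕ) : coeffQ C₁ C₂ (i + 2) = -coeffQ C₁ C₂ i := by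
  unfold coeffQ
  rcases Nat.mod_two_eq_zero_or_one i with h | h
  · have h2 : (i + 2) / 2 = i / 2 + 1 := by omega
    simp [h, h2, pow_succ]
  · have h2 : (i + 2 - 1) / 2 = (i - 1) / 2 + 1 := by omega
    simp only [Nat.add_mod_right, h, h2, pow_succ, one_ne_zero, if_false]
    ring

lemma combination_eq (Λ₁ Λ₂ : ℝ) (C₀ C₁ C₂ : ℂ) (i : ℕ) (x y : ℝ) :
    C₀ * f0 Λ₁ Λ₂ i x y + C₁ * f1 Λ₁ Λ₂ i x y + C₂ * f2 Λ₁ Λ₂ i x y =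
      coeffP C₀ i * ((x ^ (2 - Λ₂) * y ^ Λ₁ : ℝ) : ℂ)
        + coeffQ C₁ C₂ i * ((x ^ (Λ₁ + 1) * y ^ (Λ₂ + 1) : ℝ) : ℂ) := by
  unfold f0 f1 f2 coeffP coeffQ
  rcases Nat.mod_two_eq_zero_or_one i with h | h <;> by_cases h0 : i = 0 <;>
    simp [h, h0] <;> ring

lemma hasDerivAt_ofReal_rpow (p : ℝ) {x : ℝ} (hx : 0 < x) :
    HasDerivAt (fun t : ℝ => ((t ^ p : ℝ) : ℂ)) ((p * x ^ (p - 1) : ℝ) : ℂ) x :=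
  (Real.hasDerivAt_rpow_const (Or.inl hx.ne')).ofReal_comp

lemma mul_rpow_sub_one (p : ℝ) {x : ℝ} (hx : 0 < x) :
    (x : ℂ) * ((x ^ (p - 1) : ℝ) : ℂ) = ((x ^ p : ℝ) : ℂ) := by
  rw [← Complex.ofReal_mul, Real.rpow_sub_one hx.ne', mul_div_cancel₀ _ hx.ne']

lemma eul1_monomials (a b : ℂ) (p q r s : ℝ) {x y : ℝ} (hx : 0 < x) :
    eul1 (fun x y => a * ((x ^ p * y ^ q : ℝ) : ℂ) + b * ((x ^ r * y ^ s : ℝ) : ℂ)) x y =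
      p * (a * ((x ^ p * y ^ q : ℝ) : ℂ)) + r * (b * ((x ^ r * y ^ s : ℝ) : ℂ)) := by
  have h := (((hasDerivAt_ofReal_rpow p hx).mul_const ((y ^ q : ℝ) : ℂ)).const_mul a).add
    (((hasDerivAt_ofReal_rpow r hx).mul_const ((y ^ s : ℝ) : ℂ)).const_mul b)
  unfold eul1
  simp only [Complex.ofReal_mul]
  refine (congrArg _ h.deriv).trans ?_
  rw [← mul_rpow_sub_one p hx, ← mul_rpow_sub_one r hx]
  push_cast
  ring

/-- Follows from `eul1_monomials` by exchanging the variables. -/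
lemma eul2_monomials (a b : ℂ) (p q r s : ℝ) {x y : ℝ} (hy : 0 < y) :
    eul2 (fun x y => a * ((x ^ p * y ^ q : ℝ) : ℂ) + b * ((x ^ r * y ^ s : ℝ) : ℂ)) x y =
      q * (a * ((x ^ p * y ^ q : ℝ) : ℂ)) + s * (b * ((x ^ r * y ^ s : ℝ) : ℂ)) := by
  have h := eul1_monomials a b q p s r (x := y) (y := x) hy
  simp only [mul_comm (_ ^ q : ℝ), mul_comm (_ ^ s : ℝ)] at h
  exact h

/-- The families `φ_i = C₀f_{0,i} + C₁f_{1,i} + C₂f_{2,i}` satisfy the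
full system (A_i) (0 ≤ i ≤ d−2), (B_i) (0 ≤ i ≤ d−2), (C_j) (0 ≤ j ≤ d) of differential
equations for degenerate Whittaker functions with trivial character. -/
theorem explicit_solutions_trivial_character (Λ₁ Λ₂ : ℝ) (d : ℕ) (hd : 2 ≤ d)
    (hΛ : Λ₁ - Λ₂ = (d : ℝ)) (C₀ C₁ C₂ : ℂ) (φ : ℕ → ℝ → ℝ → ℂ)
    (hφ : ∀ i x y, φ i x y =
      C₀ * f0 Λ₁ Λ₂ i x y + C₁ * f1 Λ₁ Λ₂ i x y + C₂ * f2 Λ₁ Λ₂ i x y) :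
    (∀ i, i ≤ d - 2 → ∀ x y : ℝ, 0 < x → 0 < y →
      (eul1 (φ i) x y + ((Λ₂ - i - 2 : ℝ) : ℂ) * φ i x y)
        + (eul2 (φ (i + 2)) x y + ((Λ₁ - i - 2 : ℝ) : ℂ) * φ (i + 2) x y) = 0) ∧
    (∀ i, i ≤ d - 2 → ∀ x y : ℝ, 0 < x → 0 < y →
      (eul2 (φ i) x y + ((-Λ₁ + i : ℝ) : ℂ) * φ i x y)
        + (eul1 (φ (i + 2)) x y + ((-2 * Λ₁ + Λ₂ + i : ℝ) : ℂ) * φ (i + 2) x y) = 0) ∧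
    (∀ j, j ≤ d → ∀ x y : ℝ, 0 < x → 0 < y →
      (j : ℂ) * (eul2 (φ (j - 1)) x y + ((-Λ₁ + j - 1 : ℝ) : ℂ) * φ (j - 1) x y)
        - ((Λ₁ - Λ₂ - j : ℝ) : ℂ) *
            (eul1 (φ (j + 1)) x y + ((-Λ₁ + j - 1 : ℝ) : ℂ) * φ (j + 1) x y) = 0) := by
  have hφ' : ∀ i, φ i = fun x y => coeffP C₀ i * ((x ^ (2 - Λ₂) * y ^ Λ₁ : ℝ) : ℂ)
      + coeffQ C₁ C₂ i * ((x ^ (Λ₁ + 1) * y ^ (Λ₂ + 1) : ℝ) : ℂ) := fun i => by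
    funext x y
    rw [hφ, combination_eq]
  have hP : ∀ i, coeffP C₀ (i + 1) = 0 := fun i => by simp [coeffP]
  have hP0 : ∀ i : ℕ, (i : ℂ) * coeffP C₀ i = 0 := fun i => by
    by_cases h : i = 0 <;> simp [coeffP, h]
  refine ⟨fun i _ x y hx hy => ?_, fun i _ x y hx hy => ?_, fun j _ x y hx hy => ?_⟩
  · simp only [hφ', eul1_monomials _ _ _ _ _ _ hx, eul2_monomials _ _ _ _ _ _ hy,
      coeffQ_add_two, hP (i + 1)]
    generalize x ^ (2 - Λ₂) * y ^ Λ₁ = P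
    generalize x ^ (Λ₁ + 1) * y ^ (Λ₂ + 1) = Q
    push_cast
    linear_combination (-(P : ℂ)) * hP0 i
  · simp only [hφ', eul1_monomials _ _ _ _ _ _ hx, eul2_monomials _ _ _ _ _ _ hy,
      coeffQ_add_two, hP (i + 1)]
    generalize x ^ (2 - Λ₂) * y ^ Λ₁ = P
    generalize x ^ (Λ₁ + 1) * y ^ (Λ₂ + 1) = Q
    push_cast
    linear_combination (P : ℂ) * hP0 i
  · rcases j with _ | k
    -- For `j = 0` the first summand has the factor `j`, and in the second one
    -- `∂₁ − Λ₁ − 1` kills `Q`, while `φ₁` has no `P`-part.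
    · simp only [hφ', eul1_monomials _ _ _ _ _ _ hx, hP 0]
      push_cast
      ring
    · simp only [hφ', eul1_monomials _ _ _ _ _ _ hx, eul2_monomials _ _ _ _ _ _ hy,
        Nat.add_sub_cancel, show k + 1 + 1 = k + 2 from rfl, coeffQ_add_two, hP (k + 1)]
      generalize x ^ (2 - Λ₂) * y ^ Λ₁ = P
      generalize x ^ (Λ₁ + 1) * y ^ (Λ₂ + 1) = Q
      push_cast
      linear_combination ((k : ℂ) + 1) * P * hP0 k
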